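/- Let p be a prime, and let α_1,…,α_n be positive integers with r = α_1+⋯+α_n ≤ p-3. For any positive integer b, define U_{bp}(α_1,…,α_n) = Σ 1/(l_1^{α_1}⋯l_n^{α_n}), the sum over n-tuples of pairwise distinct positive integers l_i < bp each coprime to p. Then U_{bp}(α_1,…,α_n) ≡ (-1)^n (n-1)!·(b²r(r+1)/(2(r+2)))·B_{p-r-2}·p² (mod p³) if r is odd, and ≡ (-1)^{n-1}(n-1)!·(br/(r+1))·B_{p-r-1}·p (mod p²) if r is even. -/

import Mathlib

/-- `x ≡ y (mod p^r)` as p-integral rationals. -/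
def ratCong (p r : ℕ) (x y : ℚ) : Prop :=
  ∃ z : ℚ, x - y = (p : ℚ) ^ r * z ∧ ¬ (p ∣ z.den)

/-- `U_{bp}(α₁,…,αₙ)`: sum over pairwise distinct positive `lᵢ < b·p` coprime to `p`. -/
def U (p b : ℕ) {n : ℕ} (α : Fin n → ℕ) : ℚ :=
  ∑ l ∈ (Fintype.piFinset fun _ : Fin n => Finset.Ico 1 (b * p)) |>.filter
      (fun l => Function.Injective l ∧ ∀ i, ¬ p ∣ l i),
    ∏ i, (1 : ℚ) / (l i : ℚ) ^ (α i)


/-- `x` is `p^k` times a `p`-integral rational. -/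
def PI (p k : ℕ) (x : ℚ) : Prop := ∃ z : ℚ, x = (p : ℚ) ^ k * z ∧ ¬ (p ∣ z.den)

namespace PI

theorem mul {p : ℕ} (hp : p.Prime) {j k : ℕ} {x y : ℚ} (hx : PI p j x) (hy : PI p k y) :
    PI p (j + k) (x * y) := by
  obtain ⟨z, rfl, hz⟩ := hx
  obtain ⟨w, rfl, hw⟩ := hy
  refine ⟨z * w, by ring, fun h => ?_⟩
  rcases hp.dvd_mul.1 (h.trans (Rat.mul_den_dvd z w)) with h | h
  · exact hz h
  · exact hw h

theorem add {p : ℕ} (hp : p.Prime) {k : ℕ} {x y : ℚ} (hx : PI p k x) (hy : PI p k y) :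
    PI p k (x + y) := by
  obtain ⟨z, rfl, hz⟩ := hx
  obtain ⟨w, rfl, hw⟩ := hy
  refine ⟨z + w, by ring, fun h => ?_⟩
  rcases hp.dvd_mul.1 (h.trans (Rat.add_den_dvd z w)) with h | h
  · exact hz h
  · exact hw h

theorem neg {p : ℕ} {k : ℕ} {x : ℚ} (hx : PI p k x) : PI p k (-x) := by
  obtain ⟨z, rfl, hz⟩ := hx
  exact ⟨-z, by ring, by simpa using hz⟩

theorem sub {p : ℕ} (hp : p.Prime) {k : ℕ} {x y : ℚ} (hx : PI p k x) (hy : PI p k y) :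
    PI p k (x - y) := by
  rw [sub_eq_add_neg]; exact hx.add hp hy.neg

theorem int {p : ℕ} (hp : p.Prime) (x : ℤ) : PI p 0 x :=
  ⟨x, by simp, by simpa using hp.one_lt.ne'⟩

theorem nat {p : ℕ} (hp : p.Prime) (x : ℕ) : PI p 0 x := by
  simpa using int hp (x : ℤ)

theorem zero {p : ℕ} (hp : p.Prime) (k : ℕ) : PI p k 0 :=
  ⟨0, by simp, by simpa using hp.one_lt.ne'⟩

theorem self {p : ℕ} (hp : p.Prime) (k : ℕ) : PI p k ((p : ℚ) ^ k) :=
  ⟨1, by simp, by simpa using hp.one_lt.ne'⟩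

theorem self1 {p : ℕ} (hp : p.Prime) : PI p 1 (p : ℚ) := by
  simpa using self hp 1

theorem of_dvd {p : ℕ} (hp : p.Prime) {k : ℕ} {x : ℤ} (h : (p : ℤ) ^ k ∣ x) : PI p k x := by
  obtain ⟨c, rfl⟩ := h
  have := (self hp k).mul hp (int hp c)
  simpa using this

theorem inv {p : ℕ} {l : ℕ} (h : ¬ p ∣ l) : PI p 0 ((l : ℚ)⁻¹) := by
  refine ⟨(l : ℚ)⁻¹, by simp, ?_⟩
  have : l ≠ 0 := by rintro rfl; simp at h
  rw [Rat.inv_natCast_den]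
  simpa [this] using h

theorem mono {p : ℕ} (hp : p.Prime) {j k : ℕ} (h : j ≤ k) {x : ℚ} (hx : PI p k x) :
    PI p j x := by
  obtain ⟨i, rfl⟩ := Nat.exists_eq_add_of_le h
  obtain ⟨z, rfl, hz⟩ := hx
  have h1 : PI p 0 ((p : ℚ) ^ i * z) := by
    have h2 : PI p 0 z := ⟨z, by simp, hz⟩
    have := (nat hp (p ^ i)).mul hp h2
    simpa using this
  have := (self hp j).mul hp h1
  simpa [pow_add, mul_assoc] using this

theorem mul0 {p : ℕ} (hp : p.Prime) {k : ℕ} {x y : ℚ} (hx : PI p 0 x) (hy : PI p k y) :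
    PI p k (x * y) := by simpa using hx.mul hp hy

theorem pow0 {p : ℕ} (hp : p.Prime) {x : ℚ} (hx : PI p 0 x) (i : ℕ) : PI p 0 (x ^ i) := by
  induction i with
  | zero => simpa using nat hp 1
  | succ i ih => rw [pow_succ]; exact ih.mul0 hp hx

theorem sum {p : ℕ} (hp : p.Prime) {k : ℕ} {ι : Type*} (s : Finset ι) (f : ι → ℚ)
    (h : ∀ i ∈ s, PI p k (f i)) : PI p k (∑ i ∈ s, f i) := by
  classical
  induction s using Finset.induction_on with
  | empty => simpa using zero hp k
  | insert a s ha ih =>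
    rw [Finset.sum_insert ha]
    exact (h a (by simp)).add hp (ih fun i hi => h i (by simp [hi]))

theorem cancel {p : ℕ} (hp : p.Prime) {k l : ℕ} (hl : ¬ p ∣ l) {x : ℚ} (h : PI p k (l * x)) :
    PI p k x := by
  have h0 : (l : ℚ) ≠ 0 := by
    have : l ≠ 0 := by rintro rfl; simp at hl
    exact_mod_cast this
  have := (inv hl).mul0 hp h
  rwa [inv_mul_cancel_left₀ h0] at this

end PI

theorem bern'_int {p : ℕ} (hp : p.Prime) (n : ℕ) (hn : n + 1 < p) : PI p 0 (bernoulli' n) := by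
  induction n using Nat.strong_induction_on with
  | _ n ih =>
    rw [bernoulli'_def]
    refine PI.sub hp (by simpa using PI.nat hp 1) (PI.sum hp _ _ fun k hk => ?_)
    have hk := Finset.mem_range.1 hk
    have h1 := ih k hk (by omega)
    have h2 : PI p 0 (((n - k + 1 : ℕ) : ℚ)⁻¹) :=
      PI.inv fun h => by have := Nat.le_of_dvd (by omega) h; omega
    have := ((PI.nat hp (n.choose k)).mul0 hp h2).mul0 hp h1
    convert this using 1
    push_cast [Nat.cast_sub hk.le]
    ring

theorem bern_int {p : ℕ} (hp : p.Prime) (n : ℕ) (hn : n + 1 < p) : PI p 0 (bernoulli n) := by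
  have := (PI.pow0 hp (PI.int hp (-1)) n).mul0 hp (bern'_int hp n hn)
  simpa [bernoulli] using this

/-- Power sums modulo `p^2`. -/
theorem powsum {p : ℕ} (hp : p.Prime) (b m : ℕ) (hm : m + 1 < p) :
    PI p 2 ((∑ l ∈ Finset.range (b * p), (l : ℚ) ^ m) - b * p * bernoulli m) := by
  rw [sum_range_pow, Finset.sum_range_succ]
  have : bernoulli m * ((m + 1).choose m : ℚ) * ((b * p : ℕ) : ℚ) ^ (m + 1 - m) / (m + 1)
      = b * p * bernoulli m := by
    have h1 : (m : ℚ) + 1 ≠ 0 := by positivity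
    simp
    field_simp
  rw [this, add_sub_cancel_right]
  refine PI.sum hp _ _ fun k hk => ?_
  have hk := Finset.mem_range.1 hk
  have h2 : PI p 0 (((m + 1 : ℕ) : ℚ)⁻¹) :=
      PI.inv fun h => by have := Nat.le_of_dvd (by omega) h; omega
  obtain ⟨i, hi⟩ : ∃ i, m + 1 - k = 2 + i := ⟨m + 1 - k - 2, by omega⟩
  have := ((((bern_int hp k (by omega)).mul0 hp (PI.nat hp ((m + 1).choose k))).mul0 hp
    (PI.nat hp (b ^ (2 + i) * p ^ i))).mul0 hp h2).mul0 hp (PI.self hp 2)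
  convert this using 1
  rw [hi]
  push_cast
  ring

theorem pow_expand (x t : ℤ) (p k : ℕ) :
    (p : ℤ) ^ 2 ∣ (x + p * t) ^ (k + 1) - (x ^ (k + 1) + (k + 1) * x ^ k * (p * t)) := by
  induction k with
  | zero => simp
  | succ k ih =>
    obtain ⟨c, hc⟩ := ih
    have hc' : (x + p * t) ^ (k + 1) = (x ^ (k + 1) + (k + 1) * x ^ k * (p * t)) + p ^ 2 * c := by
      linarith
    refine ⟨c * (x + p * t) + (k + 1) * x ^ k * t ^ 2, ?_⟩
    rw [pow_succ, hc']
    push_cast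
    ring

theorem fermat_int {p : ℕ} (hp : p.Prime) (x : ℤ) (j i : ℕ) (hi : 1 ≤ i) :
    (p : ℤ) ∣ x ^ ((p - 1) * j + i) - x ^ i := by
  have := Fact.mk hp
  rw [← ZMod.intCast_zmod_eq_zero_iff_dvd]
  push_cast
  rw [pow_add, pow_mul]
  by_cases h : (x : ZMod p) = 0
  · simp [h, (show i ≠ 0 by omega)]
  · rw [ZMod.pow_card_sub_one_eq_one h]; simp

theorem euler_int {p : ℕ} (hp : p.Prime) (x : ℕ) (hx : ¬ p ∣ x) :
    (p : ℤ) ^ 2 ∣ (x : ℤ) ^ (p * (p - 1)) - 1 := by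
  have h := Nat.ModEq.pow_totient (n := p ^ 2) (x := x)
    (Nat.Coprime.pow_right 2 ((hp.coprime_iff_not_dvd.2 hx).symm))
  rw [Nat.totient_prime_pow hp (by norm_num)] at h
  have h' := (Nat.modEq_iff_dvd.1 h.symm)
  simpa using h'

/-- the auxiliary function, well defined on residues mod `p` -/
def GG (p r : ℕ) (x : ℤ) : ℤ := (r + 1) * x ^ (p * (p - 1) - r) - r * x ^ (p - 1 - r)

theorem exp_eq (p r : ℕ) (hp5 : 5 ≤ p) (hr : r + 3 ≤ p) :
    p * (p - 1) - r = (p - 1) * (p - 1) + (p - 1 - r) := by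
  obtain ⟨q, rfl⟩ : ∃ q, p = q + 1 := ⟨p - 1, by omega⟩
  simp only [Nat.add_sub_cancel]
  have : (q + 1) * q = q * q + q := by ring
  omega

theorem GG_congr {p r : ℕ} (hp : p.Prime) (hp5 : 5 ≤ p) (hr : r + 3 ≤ p) {x y : ℤ}
    (h : (p : ℤ) ∣ y - x) : (p : ℤ) ^ 2 ∣ GG p r y - GG p r x := by
  obtain ⟨t, ht⟩ := h
  obtain rfl : y = x + p * t := by linarith
  have he := exp_eq p r hp5 hr
  obtain ⟨m, hm⟩ : ∃ m, p - 1 - r = m + 1 := ⟨p - 1 - r - 1, by omega⟩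
  have hpr : (p : ℤ) = m + 1 + r + 1 := by omega
  rw [hm] at he
  unfold GG
  rw [he, hm]
  obtain ⟨A, hA⟩ := pow_expand x t p m
  obtain ⟨B, hB⟩ := pow_expand x t p ((p - 1) * (p - 1) + m)
  obtain ⟨C, hC⟩ := fermat_int hp x (p - 1) m (by omega)
  rw [← add_assoc]
  have hA' := sub_eq_iff_eq_add.1 hA
  have hB' := sub_eq_iff_eq_add.1 hB
  have hC' := sub_eq_iff_eq_add.1 hC
  rw [hA', hB', hC']
  have hc : (((p - 1) * (p - 1) + m : ℕ) : ℤ) = (p - 1) * (p - 1) + m := by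
    push_cast [Nat.cast_sub hp.one_lt.le]; ring
  rw [hc]
  have hm' : (m : ℤ) = p - r - 2 := by linarith
  rw [hm']
  refine ⟨(r + 1) * (B + ((p - 1) * (p - 1) + (p - r - 2) + 1) * C * t) - r * A
    + (r + 1) * (p - 1) * x ^ m * t - r * x ^ m * t, ?_⟩
  ring


theorem exists_gen {p : ℕ} (hp : p.Prime) {m : ℕ} (hm : 0 < m) (hmp : m < p - 1) :
    ∃ a : ℕ, ¬ p ∣ a ∧ (a : ZMod p) ^ m ≠ 1 := by
  have := Fact.mk hp
  obtain ⟨g, hg⟩ := IsCyclic.exists_generator (α := (ZMod p)ˣ)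
  have ho := orderOf_eq_card_of_forall_mem_zpowers hg
  rw [Nat.card_eq_fintype_card, ZMod.card_units_eq_totient, Nat.totient_prime hp] at ho
  have hv : (((g : ZMod p).val : ℕ) : ZMod p) = g := ZMod.natCast_zmod_val _
  refine ⟨(g : ZMod p).val, fun h => ?_, fun h => ?_⟩
  · rw [← ZMod.natCast_eq_zero_iff, hv] at h
    exact g.ne_zero h
  · rw [hv] at h
    have h1 : g ^ m = 1 := by ext; simpa using h
    have := Nat.le_of_dvd hm (orderOf_dvd_of_pow_eq_one h1)
    omega

theorem GG_mul {p r : ℕ} (hp : p.Prime) (hp5 : 5 ≤ p) (hr : r + 3 ≤ p) {a : ℕ} (ha : ¬ p ∣ a)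
    (x : ℤ) : (p : ℤ) ^ 2 ∣ GG p r ((a : ℤ) ^ p * x) - ((a : ℤ) ^ p) ^ (p - 1 - r) * GG p r x := by
  unfold GG
  rw [exp_eq p r hp5 hr]
  have h1 : (p : ℤ) ^ 2 ∣ ((a : ℤ) ^ p) ^ ((p - 1) * (p - 1)) - 1 := by
    rw [← pow_mul, ← mul_assoc, pow_mul]
    exact (euler_int hp a ha).trans (sub_one_dvd_pow_sub_one _ _)
  obtain ⟨c, hc⟩ := h1
  have hc' := sub_eq_iff_eq_add.1 hc
  rw [mul_pow, mul_pow, pow_add, hc']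
  refine ⟨(r + 1) * c * ((a : ℤ) ^ p) ^ (p - 1 - r) * x ^ ((p - 1) * (p - 1) + (p - 1 - r)), ?_⟩
  ring

theorem GG_sum1 {p r : ℕ} (hp : p.Prime) (hp5 : 5 ≤ p) (hr : r + 3 ≤ p) (hr1 : 1 ≤ r) :
    (p : ℤ) ^ 2 ∣ ∑ i ∈ Finset.range p, GG p r i := by
  have := Fact.mk hp
  obtain ⟨a, ha, ham⟩ := exists_gen hp (m := p - 1 - r) (by omega) (by omega)
  have key : ∀ x y : ℤ, (p : ℤ) ∣ y - x → ((GG p r y : ℤ) : ZMod (p ^ 2)) = (GG p r x : ℤ) := by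
    intro x y h
    have h2 := GG_congr (r := r) hp hp5 hr h
    rw [← sub_eq_zero, ← Int.cast_sub, ZMod.intCast_zmod_eq_zero_iff_dvd]
    exact_mod_cast h2
  set f : ZMod p → ZMod (p ^ 2) := fun x => ((GG p r (x.val : ℤ) : ℤ) : ZMod (p ^ 2)) with hf
  have hs : ((∑ i ∈ Finset.range p, GG p r i : ℤ) : ZMod (p ^ 2)) = ∑ x : ZMod p, f x := by
    push_cast
    symm
    refine Finset.sum_bij (fun x _ => x.val) ?_ ?_ ?_ ?_
    · intro x _; exact Finset.mem_range.2 (ZMod.val_lt x)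
    · intro x _ y _ h; exact ZMod.val_injective p h
    · intro i hi
      exact ⟨(i : ZMod p), Finset.mem_univ _, ZMod.val_cast_of_lt (Finset.mem_range.1 hi)⟩
    · intro x _; rfl
  have ha0 : (a : ZMod p) ≠ 0 := by
    rwa [Ne, ZMod.natCast_eq_zero_iff]
  have hfa : ∀ x, f ((a : ZMod p) * x) = (((a : ℤ) ^ p) ^ (p - 1 - r) : ℤ) * f x := by
    intro x
    have e1 : f ((a : ZMod p) * x) = (GG p r ((a : ℤ) ^ p * (x.val : ℤ)) : ℤ) := by
      refine key _ _ ?_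
      rw [← ZMod.intCast_zmod_eq_zero_iff_dvd]
      push_cast
      rw [ZMod.natCast_zmod_val, ZMod.natCast_zmod_val, ZMod.pow_card, sub_self]
    rw [e1, hf]
    dsimp only
    rw [← sub_eq_zero, ← Int.cast_mul, ← Int.cast_sub, ZMod.intCast_zmod_eq_zero_iff_dvd]
    exact_mod_cast GG_mul hp hp5 hr ha (x.val : ℤ)
  have hsum : ∑ x : ZMod p, f ((a : ZMod p) * x) = ∑ x : ZMod p, f x :=
    Fintype.sum_equiv (Equiv.mulLeft₀ (a : ZMod p) ha0) _ _ (fun x => rfl)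
  simp_rw [hfa] at hsum
  rw [← Finset.mul_sum, ← hs, ← Int.cast_mul, ← sub_eq_zero, ← Int.cast_sub,
    ZMod.intCast_zmod_eq_zero_iff_dvd] at hsum
  set s := ∑ i ∈ Finset.range p, GG p r i
  have hd : (p : ℤ) ^ 2 ∣ (((a : ℤ) ^ p) ^ (p - 1 - r) - 1) * s := by
    have : (((a : ℤ) ^ p) ^ (p - 1 - r) - 1) * s = ((a : ℤ) ^ p) ^ (p - 1 - r) * s - s := by ring
    rw [this]; exact_mod_cast hsum
  refine IsCoprime.dvd_of_dvd_mul_left ?_ hd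
  refine IsCoprime.pow_left ?_
  rw [(Nat.prime_iff_prime_int.1 hp).coprime_iff_not_dvd,
    ← ZMod.intCast_zmod_eq_zero_iff_dvd]
  push_cast
  rw [ZMod.pow_card, sub_eq_zero]
  exact ham

theorem GG_sum {p r : ℕ} (hp : p.Prime) (hp5 : 5 ≤ p) (hr : r + 3 ≤ p) (hr1 : 1 ≤ r) (b : ℕ) :
    (p : ℤ) ^ 2 ∣ ∑ i ∈ Finset.range (b * p), GG p r i := by
  induction b with
  | zero => simp
  | succ b ih =>
    rw [add_mul, one_mul, Finset.sum_range_add]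
    refine dvd_add ih ?_
    have h1 := GG_sum1 (r := r) hp hp5 hr hr1
    have h2 : (p : ℤ) ^ 2 ∣ ∑ i ∈ Finset.range p, (GG p r ((b * p + i : ℕ) : ℤ) - GG p r i) :=
      Finset.dvd_sum fun i _ => GG_congr hp hp5 hr ⟨b, by push_cast; ring⟩
    rw [Finset.sum_sub_distrib] at h2
    exact (dvd_sub_left h1).1 h2

/-- the index set -/
def TT (p b : ℕ) : Finset ℕ := (Finset.Ico 1 (b * p)).filter (fun l => ¬ p ∣ l)

/-- the harmonic power sum -/
def SS (p b r : ℕ) : ℚ := ∑ l ∈ TT p b, ((l : ℚ)⁻¹) ^ r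

theorem mem_TT {p b l : ℕ} : l ∈ TT p b ↔ (l < b * p ∧ ¬ p ∣ l) := by
  unfold TT
  rw [Finset.mem_filter, Finset.mem_Ico]
  constructor
  · rintro ⟨⟨_, h⟩, h2⟩; exact ⟨h, h2⟩
  · rintro ⟨h, h2⟩
    refine ⟨⟨?_, h⟩, h2⟩
    rcases Nat.eq_zero_or_pos l with rfl | h3
    · simp at h2
    · exact h3

theorem TT_eq (p b : ℕ) : TT p b = (Finset.range (b * p)).filter (fun l => ¬ p ∣ l) := by
  ext l; rw [mem_TT]; simp

theorem SS_int {p : ℕ} (hp : p.Prime) (b r : ℕ) : PI p 0 (SS p b r) :=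
  PI.sum hp _ _ fun _ hl => PI.pow0 hp (PI.inv (mem_TT.1 hl).2) _

theorem SS_base {p r : ℕ} (hp : p.Prime) (hp5 : 5 ≤ p) (hr : r + 3 ≤ p) (hr1 : 1 ≤ r) (b : ℕ) :
    PI p 2 (SS p b r - b * r / (r + 1) * bernoulli (p - 1 - r) * p) := by
  have hc : ¬ p ∣ (r + 1) := fun h => by have := Nat.le_of_dvd (by omega) h; omega
  refine PI.cancel hp hc ?_
  have h1 := PI.of_dvd hp (GG_sum (r := r) hp hp5 hr hr1 b)
  have h2 := (PI.nat hp r).mul0 hp (powsum hp b (p - 1 - r) (by omega))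
  have h3 : PI p 2 ((r + 1) * SS p b r - r * ∑ l ∈ Finset.range (b * p), (l : ℚ) ^ (p - 1 - r)
      - ((∑ i ∈ Finset.range (b * p), GG p r i : ℤ) : ℚ)) := by
    rw [SS, TT_eq, Finset.sum_filter, Finset.mul_sum, Finset.mul_sum]
    push_cast
    rw [← Finset.sum_sub_distrib, ← Finset.sum_sub_distrib]
    refine PI.sum hp _ _ fun l _ => ?_
    unfold GG
    push_cast
    have hrp : p * (p - 1) - r + r = p * (p - 1) := by
      rw [exp_eq p r hp5 hr]
      obtain ⟨q, rfl⟩ : ∃ q, p = q + 1 := ⟨p - 1, by omega⟩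
      simp only [Nat.add_sub_cancel]
      have : (q + 1) * q = q * q + q := by ring
      omega
    split_ifs with h
    swap
    · have hl0 : (l : ℚ) ≠ 0 := by
        have : l ≠ 0 := by rintro rfl; simp at h
        exact_mod_cast this
      have h4 := (((PI.nat hp (r + 1)).mul0 hp (PI.pow0 hp (PI.inv h) r)).mul0 hp
        (PI.of_dvd hp (euler_int hp l h))).neg
      convert h4 using 1
      have k1 : ((l : ℚ)⁻¹) ^ r * (l : ℚ) ^ r = 1 := by
        rw [← mul_pow, inv_mul_cancel₀ hl0, one_pow]
      have k2 : (l : ℚ) ^ (p * (p - 1)) = (l : ℚ) ^ (p * (p - 1) - r) * (l : ℚ) ^ r := by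
        rw [← pow_add, hrp]
      push_cast
      rw [k2]
      linear_combination ((r : ℚ) + 1) * (l : ℚ) ^ (p * (p - 1) - r) * k1
    · obtain ⟨c, rfl⟩ := h
      obtain ⟨j, hj⟩ : ∃ j, p * (p - 1) - r = 2 + j := by
        refine ⟨p * (p - 1) - r - 2, ?_⟩
        rw [exp_eq p r hp5 hr]; omega
      rw [hj]
      have h4 := ((PI.nat hp ((r + 1) * p ^ j * c ^ (2 + j))).mul0 hp (PI.self hp 2)).neg
      convert h4 using 1
      push_cast
      ring
  convert (h3.add hp h1).add hp h2 using 1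
  have : (r : ℚ) + 1 ≠ 0 := by positivity
  push_cast
  field_simp
  ring


theorem v_expand {p : ℕ} (hp : p.Prime) (b l : ℕ) (hl : ¬ p ∣ l) (hlb : l < b * p) (r : ℕ) :
    PI p 3 (2 * (((b * p - l : ℕ) : ℚ)⁻¹) ^ r - (-1) ^ r * (2 * ((l : ℚ)⁻¹) ^ r
      + 2 * r * (b * p) * ((l : ℚ)⁻¹) ^ (r + 1)
      + r * (r + 1) * (b * p) ^ 2 * ((l : ℚ)⁻¹) ^ (r + 2))) := by
  have hl' : ¬ p ∣ (b * p - l) := fun h => hl ((Nat.dvd_sub_iff_right hlb.le (Dvd.intro_left b rfl)).1 h)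
  have hv := PI.inv hl'
  have hu := PI.inv hl
  have h0 : (l : ℚ) ≠ 0 := by
    have : l ≠ 0 := by rintro rfl; simp at hl
    exact_mod_cast this
  have h0' : ((b * p - l : ℕ) : ℚ) ≠ 0 := by
    have : b * p - l ≠ 0 := by omega
    exact_mod_cast this
  have hr : ((b * p - l : ℕ) : ℚ)⁻¹ = -(l : ℚ)⁻¹ + (b * p) * (l : ℚ)⁻¹ * ((b * p - l : ℕ) : ℚ)⁻¹ := by
    have hc : (b : ℚ) * p = ((b * p - l : ℕ) : ℚ) + l := by
      push_cast [Nat.cast_sub hlb.le]; ring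
    rw [hc]
    field_simp
    ring
  set u := (l : ℚ)⁻¹
  set v := ((b * p - l : ℕ) : ℚ)⁻¹
  have hr3 : v = -u - b * p * u ^ 2 - (b * p) ^ 2 * u ^ 3 + (b * p) ^ 3 * u ^ 3 * v := by
    linear_combination (1 + b * p * u + (b * p) ^ 2 * u ^ 2) * hr
  have hbp : PI p 3 (((b : ℚ) * p) ^ 3) := by
    have := (PI.nat hp (b ^ 3)).mul0 hp (PI.self hp 3)
    convert this using 1
    push_cast; ring
  have hb : PI p 0 ((b : ℚ) * p) := by simpa using PI.nat hp (b * p)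
  induction r with
  | zero => simpa using PI.zero hp 3
  | succ r ih =>
    have i1 : PI p 0 ((-1 : ℚ) ^ r) := by simpa using PI.pow0 hp (PI.int hp (-1)) r
    have t1 := hv.mul0 hp ih
    -- remainder
    have q : PI p 0 ((-1) ^ r * u ^ (r + 3) * v * ((r + 1 : ℕ) : ℚ) * ((r + 2 : ℕ) : ℚ)) :=
      (((i1.mul0 hp (PI.pow0 hp hu _)).mul0 hp hv).mul0 hp (PI.nat hp _)).mul0 hp (PI.nat hp _)
    have t2 := q.mul0 hp hbp
    convert t1.add hp t2 using 1
    have e2 : v ^ (r + 1) = v * v ^ r := by ring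
    rw [e2]
    push_cast
    have e4 : v = -u - b * p * u ^ 2 + (b * p) ^ 2 * u ^ 2 * v := by
      linear_combination (1 + b * p * u) * hr
    linear_combination (-1) ^ r * (2 * u ^ r * hr3 + 2 * r * (b * p) * u ^ (r + 1) * e4
      + r * (r + 1) * (b * p) ^ 2 * u ^ (r + 2) * hr)

theorem TT_refl {p : ℕ} (b : ℕ) (f : ℕ → ℚ) :
    ∑ l ∈ TT p b, f (b * p - l) = ∑ l ∈ TT p b, f l := by
  have aux : ∀ l ∈ TT p b, b * p - l ∈ TT p b := by
    intro l hl
    have h := mem_TT.1 hl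
    have h0 : l ≠ 0 := by rintro rfl; simp at h
    refine mem_TT.2 ⟨by omega, fun hd => h.2 ?_⟩
    exact (Nat.dvd_sub_iff_right h.1.le (Dvd.intro_left b rfl)).1 hd
  refine Finset.sum_nbij' (fun l => b * p - l) (fun l => b * p - l) aux aux ?_ ?_ ?_
  · intro l hl; have := (mem_TT.1 hl).1; lia
  · intro l hl; have := (mem_TT.1 hl).1; lia
  · intro l hl; rfl

theorem SS_expand {p : ℕ} (hp : p.Prime) (b r : ℕ) (hr : Odd r) :
    PI p 3 (4 * SS p b r + 2 * r * (b * p) * SS p b (r + 1)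
      + r * (r + 1) * (b * p) ^ 2 * SS p b (r + 2)) := by
  have h := PI.sum hp (TT p b) _ fun l hl =>
    v_expand hp b l (mem_TT.1 hl).2 (mem_TT.1 hl).1 r
  rw [hr.neg_one_pow] at h
  convert h using 1
  rw [Finset.sum_sub_distrib, ← Finset.mul_sum, ← Finset.mul_sum, Finset.sum_add_distrib,
    Finset.sum_add_distrib, ← Finset.mul_sum, ← Finset.mul_sum, ← Finset.mul_sum,
    TT_refl b (fun l => ((l : ℚ)⁻¹) ^ r)]
  unfold SS
  ring

theorem SS_odd1 {p : ℕ} (hp : p.Prime) (hp5 : 5 ≤ p) (b r : ℕ) (hr : Odd r) :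
    PI p 1 (SS p b r) := by
  have h4 : ¬ p ∣ 4 := fun h => by have := Nat.le_of_dvd (by omega) h; omega
  refine PI.cancel hp h4 ?_
  have h1 := (SS_expand hp b r hr).mono hp (show 1 ≤ 3 by norm_num)
  have h2 := ((PI.nat hp (2 * r * b)).mul0 hp (SS_int hp b (r + 1))).mul hp (PI.self1 hp)
  have h3 := ((PI.nat hp (r * (r + 1) * b ^ 2 * p)).mul0 hp (SS_int hp b (r + 2))).mul hp
    (PI.self1 hp)
  convert (h1.sub hp h2).sub hp h3 using 1
  push_cast
  ring

theorem SS_odd {p r : ℕ} (hp : p.Prime) (hp5 : 5 ≤ p) (hr : r + 3 ≤ p) (ho : Odd r) (b : ℕ) :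
    PI p 3 (SS p b r + b ^ 2 * r * (r + 1) / (2 * (r + 2)) * bernoulli (p - r - 2) * p ^ 2) := by
  have h4 : ¬ p ∣ 4 := fun h => by have := Nat.le_of_dvd (by omega) h; omega
  refine PI.cancel hp h4 ?_
  have hodd : Odd p := hp.odd_of_ne_two (by omega)
  have hr4 : r + 1 + 3 ≤ p := by
    obtain ⟨s, rfl⟩ := ho
    obtain ⟨t, rfl⟩ := hodd
    omega
  have h1 := SS_expand hp b r ho
  have h2 := ((PI.nat hp (2 * r * b)).mul0 hp (PI.self1 hp)).mul hp
    (SS_base (r := r + 1) hp hp5 hr4 (by omega) b)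
  have h3 := ((PI.nat hp (r * (r + 1) * b ^ 2)).mul0 hp (PI.self hp 2)).mul hp
    (SS_odd1 hp hp5 b (r + 2) (by rw [Nat.odd_add]; simp [ho]))
  convert (h1.sub hp h2).sub hp h3 using 1
  rw [show p - 1 - (r + 1) = p - r - 2 by omega]
  have e1 : (r : ℚ) + 2 ≠ 0 := by positivity
  have e2 : (r : ℚ) + 1 + 1 ≠ 0 := by positivity
  push_cast
  have e3 : (r : ℚ) + 1 + 1 = r + 2 := by ring
  rw [e3]
  field_simp
  ring


/-- the multiple sum over injective tuples -/
def VV (T : Finset ℕ) {n : ℕ} (α : Fin n → ℕ) : ℚ :=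
  ∑ l ∈ (Fintype.piFinset fun _ : Fin n => T).filter (fun l => Function.Injective l),
    ∏ i, ((l i : ℚ)⁻¹) ^ (α i)

theorem U_eq (p b : ℕ) {n : ℕ} (α : Fin n → ℕ) : U p b α = VV (TT p b) α := by
  unfold U VV
  refine Finset.sum_congr ?_ fun l _ => Finset.prod_congr rfl fun i _ => by
    rw [one_div, inv_pow]
  ext l
  simp only [Finset.mem_filter, Fintype.mem_piFinset, TT]
  constructor
  · rintro ⟨h1, h2, h3⟩; exact ⟨fun i => ⟨h1 i, h3 i⟩, h2⟩
  · rintro ⟨h1, h2⟩; exact ⟨fun i => (h1 i).1, h2, fun i => (h1 i).2⟩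

theorem VV_succ (T : Finset ℕ) {n : ℕ} (α : Fin (n + 1) → ℕ) :
    VV T α = VV T (Fin.tail α) * ∑ x ∈ T, ((x : ℚ)⁻¹) ^ (α 0)
      - ∑ i, VV T (Function.update (Fin.tail α) i (Fin.tail α i + α 0)) := by
  have h1 : VV T α = ∑ l ∈ (Fintype.piFinset fun _ : Fin n => T).filter
      (fun l => Function.Injective l), ∑ x ∈ T.filter (fun x => x ∉ Set.range l),
      ((x : ℚ)⁻¹) ^ (α 0) * ∏ i, ((l i : ℚ)⁻¹) ^ (Fin.tail α i) := by
    classical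
    rw [Finset.sum_sigma']
    unfold VV
    refine Finset.sum_bij' (fun l _ => ⟨Fin.tail l, l 0⟩) (fun y _ => Fin.cons y.2 y.1)
      ?_ ?_ ?_ ?_ ?_
    · intro l hl
      simp only [Finset.mem_filter, Fintype.mem_piFinset, Finset.mem_sigma] at hl ⊢
      have h2 := hl.2
      rw [← Fin.cons_self_tail l, Fin.cons_injective_iff] at h2
      exact ⟨⟨fun i => hl.1 _, h2.2⟩, hl.1 0, h2.1⟩
    · rintro ⟨l, x⟩ hl
      simp only [Finset.mem_filter, Fintype.mem_piFinset, Finset.mem_sigma] at hl ⊢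
      refine ⟨fun i => ?_, Fin.cons_injective_iff.2 ⟨hl.2.2, hl.1.2⟩⟩
      refine Fin.cases ?_ (fun j => ?_) i
      · exact hl.2.1
      · exact hl.1.1 j
    · intro l _; exact Fin.cons_self_tail l
    · rintro ⟨l, x⟩ _; simp
    · intro l _; rw [Fin.prod_univ_succ]; rfl
  rw [h1]
  unfold VV
  rw [Finset.sum_mul, Finset.sum_comm (s := Finset.univ), ← Finset.sum_sub_distrib]
  refine Finset.sum_congr rfl fun l hl => ?_
  simp only [Finset.mem_filter, Fintype.mem_piFinset] at hl
  rw [← Finset.sum_mul]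
  have h2 : ∑ x ∈ T.filter (fun x => x ∈ Set.range l), ((x : ℚ)⁻¹) ^ (α 0)
      = ∑ i, ((l i : ℚ)⁻¹) ^ (α 0) := by
    symm
    refine Finset.sum_bij (fun i _ => l i) ?_ ?_ ?_ ?_
    · intro i _; simp [hl.1 i]
    · intro i _ j _ h; exact hl.2 h
    · intro x hx
      obtain ⟨_, i, rfl⟩ := Finset.mem_filter.1 hx
      exact ⟨i, Finset.mem_univ _, rfl⟩
    · intro i _; rfl
  have h3 := Finset.sum_filter_add_sum_filter_not T (fun x => x ∈ Set.range l)
    (fun x : ℕ => ((x : ℚ)⁻¹) ^ (α 0))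
  rw [h2] at h3
  have h4 : ∀ j : Fin n, ∏ i, ((l i : ℚ)⁻¹) ^ (Function.update (Fin.tail α) j
      (Fin.tail α j + α 0) i) = ((l j : ℚ)⁻¹) ^ (α 0) * ∏ i, ((l i : ℚ)⁻¹) ^ (Fin.tail α i) := by
    intro j
    rw [← Finset.mul_prod_erase _ _ (Finset.mem_univ j),
      ← Finset.mul_prod_erase _ (fun i => ((l i : ℚ)⁻¹) ^ (Fin.tail α i)) (Finset.mem_univ j)]
    rw [Function.update_self, pow_add]
    have : ∏ x ∈ Finset.univ.erase j, ((l x : ℚ)⁻¹) ^ (Function.update (Fin.tail α) j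
      (Fin.tail α j + α 0) x) = ∏ x ∈ Finset.univ.erase j, ((l x : ℚ)⁻¹) ^ (Fin.tail α x) := by
      refine Finset.prod_congr rfl fun x hx => ?_
      rw [Function.update_of_ne (Finset.ne_of_mem_erase hx)]
    rw [this]
    ring
  simp_rw [h4]
  rw [← Finset.sum_mul, ← h3]
  ring

theorem SS_div {p r : ℕ} (hp : p.Prime) (hp5 : 5 ≤ p) (hr : r + 3 ≤ p) (hr1 : 1 ≤ r) (b : ℕ) :
    PI p (if Odd r then 2 else 1) (SS p b r) := by
  split_ifs with ho
  · have h1 := (SS_odd hp hp5 hr ho b).mono hp (show 2 ≤ 3 by norm_num)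
    have h5 : ¬ p ∣ 2 * (r + 2) := fun h => by
      rcases hp.dvd_mul.1 h with h | h <;> · have := Nat.le_of_dvd (by omega) h; omega
    have h2 := (((PI.nat hp (b ^ 2 * r * (r + 1))).mul0 hp (PI.inv h5)).mul0 hp
      (bern_int hp (p - r - 2) (by omega))).mul0 hp (PI.self hp 2)
    convert h1.sub hp h2 using 1
    push_cast
    ring
  · have h1 := (SS_base hp hp5 hr hr1 b).mono hp (show 1 ≤ 2 by norm_num)
    have h5 : ¬ p ∣ (r + 1) := fun h => by have := Nat.le_of_dvd (by omega) h; omega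
    have h2 := (((PI.nat hp (b * r)).mul0 hp (PI.inv h5)).mul0 hp
      (bern_int hp (p - 1 - r) (by omega))).mul hp (PI.self1 hp)
    convert h1.add hp h2 using 1
    push_cast
    ring

theorem VV_main {p : ℕ} (hp : p.Prime) (hp5 : 5 ≤ p) (b n : ℕ) : ∀ (α : Fin (n + 1) → ℕ),
    (∀ i, 1 ≤ α i) → (∑ i, α i) + 3 ≤ p →
    PI p (if Odd (∑ i, α i) then 3 else 2)
      (VV (TT p b) α - (-1) ^ n * (n.factorial : ℚ) * SS p b (∑ i, α i)) := by
  induction n with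
  | zero =>
    intro α h1 h2
    rw [VV_succ]
    have : VV (TT p b) (Fin.tail α) = 1 := by
      unfold VV
      have : (Fintype.piFinset fun _ : Fin 0 => TT p b).filter (fun l => Function.Injective l)
        = Finset.univ := by
        ext l
        simp [Function.injective_of_subsingleton]
      rw [this]
      simp
    rw [this]
    simpa [SS] using PI.zero hp _
  | succ n ih =>
    intro α h1 h2
    have hs : ∑ i, α i = α 0 + ∑ i, Fin.tail α i := Fin.sum_univ_succ _
    have ht1 : ∀ i, 1 ≤ Fin.tail α i := fun i => h1 _
    have htpos : 1 ≤ ∑ i, Fin.tail α i :=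
      (ht1 0).trans (Finset.single_le_sum (f := Fin.tail α) (fun _ _ => Nat.zero_le _) (Finset.mem_univ 0))
    have i1 := ih (Fin.tail α) ht1 (by omega)
    have d0 := SS_div hp hp5 (r := α 0) (by omega) (h1 0) b
    have d1 := SS_div hp hp5 (r := ∑ i, Fin.tail α i) (by omega) htpos b
    have c1 : PI p 0 ((-1) ^ n * (n.factorial : ℚ)) := by
      have := PI.int hp ((-1) ^ n * (n.factorial : ℤ))
      simpa using this
    have d2 : PI p (if Odd (∑ i, Fin.tail α i) then 2 else 1) (VV (TT p b) (Fin.tail α)) := by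
      have := (i1.mono hp (j := if Odd (∑ i, Fin.tail α i) then 2 else 1)
        (by split_ifs <;> norm_num)).add hp (c1.mul0 hp d1)
      simpa using this
    have d3 : PI p (if Odd (∑ i, α i) then 3 else 2)
        (VV (TT p b) (Fin.tail α) * SS p b (α 0)) := by
      refine (d2.mul hp d0).mono hp ?_
      have hodd : Odd (∑ i, α i) ↔ (Odd (α 0) ↔ Even (∑ i, Fin.tail α i)) := by
        rw [hs, Nat.odd_add]
      rw [← Nat.not_odd_iff_even] at hodd
      split_ifs <;> first | omega | tauto
    have d4 : PI p (if Odd (∑ i, α i) then 3 else 2)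
        (∑ i, (VV (TT p b) (Function.update (Fin.tail α) i (Fin.tail α i + α 0))
          - (-1) ^ n * (n.factorial : ℚ) * SS p b (∑ i, α i))) := by
      refine PI.sum hp _ _ fun i _ => ?_
      have hsum : ∑ j, Function.update (Fin.tail α) i (Fin.tail α i + α 0) j = ∑ j, α j := by
        rw [Finset.sum_update_of_mem (Finset.mem_univ i), hs,
          ← Finset.add_sum_erase _ (Fin.tail α) (Finset.mem_univ i), Finset.sdiff_singleton_eq_erase]
        ring
      have := ih (Function.update (Fin.tail α) i (Fin.tail α i + α 0)) (fun j => by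
        by_cases hj : j = i
        · subst hj; rw [Function.update_self]; have := ht1 j; omega
        · rw [Function.update_of_ne hj]; exact ht1 j) (by rw [hsum]; exact h2)
      rwa [hsum] at this
    convert d3.sub hp d4 using 1
    rw [VV_succ, Finset.sum_sub_distrib, Finset.sum_const, Finset.card_univ, Fintype.card_fin,
      Nat.factorial_succ]
    unfold SS
    push_cast
    rw [nsmul_eq_mul]
    push_cast
    ring

theorem stmt_4 (p b n r : ℕ) (hp : p.Prime) (hn : 1 ≤ n) (hb : 1 ≤ b)
    (α : Fin n → ℕ) (hα : ∀ i, 1 ≤ α i) (hr : r = ∑ i, α i) (hrp : r ≤ p - 3) :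
    (Odd r → ratCong p 3 (U p b α)
      ((-1) ^ n * (Nat.factorial (n - 1) : ℚ) *
        ((b : ℚ) ^ 2 * r * (r + 1) / (2 * (r + 2))) * bernoulli (p - r - 2) * p ^ 2)) ∧
    (Even r → ratCong p 2 (U p b α)
      ((-1) ^ (n - 1) * (Nat.factorial (n - 1) : ℚ) *
        ((b : ℚ) * r / (r + 1)) * bernoulli (p - r - 1) * p)) := by
  obtain ⟨k, rfl⟩ : ∃ k, n = k + 1 := ⟨n - 1, by omega⟩
  have hr1 : 1 ≤ r := by
    rw [hr]
    exact (hα 0).trans (Finset.single_le_sum (f := α) (fun _ _ => Nat.zero_le _) (Finset.mem_univ 0))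
  have hp5 : 5 ≤ p := by
    have h4 : p ≠ 4 := by rintro rfl; revert hp; norm_num
    omega
  have hr3 : r + 3 ≤ p := by omega
  have main := VV_main hp hp5 b k α hα (by omega)
  rw [← hr, ← U_eq] at main
  have c1 : PI p 0 ((-1) ^ k * (k.factorial : ℚ)) := by
    have := PI.int hp ((-1) ^ k * (k.factorial : ℤ))
    simpa using this
  constructor
  · intro ho
    rw [if_pos ho] at main
    have h := main.add hp (c1.mul0 hp (SS_odd hp hp5 hr3 ho b))
    change PI p 3 _
    convert h using 1
    simp only [Nat.add_sub_cancel]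
    ring
  · intro he
    rw [if_neg (Nat.not_odd_iff_even.2 he)] at main
    have h := main.add hp (c1.mul0 hp (SS_base hp hp5 hr3 hr1 b))
    change PI p 2 _
    convert h using 1
    simp only [Nat.add_sub_cancel]
    rw [show p - r - 1 = p - 1 - r by omega]
    ring
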